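/- Let f be a C¹-diffeomorphism of S¹ with irrational rotation number α. Then for any ε > 0 there exists a C¹-diffeomorphism h of S¹ such that the distorsion of g = h∘f∘h⁻¹ on each maximal wandering interval of g is bounded by ε. -/

import Mathlib

open Set Filter

/-- `inArc a w b` : the point `w` (mod 1) lies strictly inside the positively oriented
open arc of the circle `ℝ/ℤ` from `a` (mod 1) to `b` (mod 1). -/
def inArc (a w b : ℝ) : Prop :=
  0 < Int.fract (w - a) ∧ Int.fract (w - a) < Int.fract (b - a)

/-- A lift of an orientation-preserving `C¹`-diffeomorphism of the circle `S¹ = ℝ/ℤ`: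
a `C¹` map `F : ℝ → ℝ` with `F (x+1) = F x + 1` and `F' > 0` everywhere. -/
structure CircleDiffeo where
  toFun : ℝ → ℝ
  contDiff : ContDiff ℝ 1 toFun
  deriv_pos : ∀ x : ℝ, 0 < deriv toFun x
  commute_translation : ∀ x : ℝ, toFun (x + 1) = toFun x + 1

/-- `f` has rotation number (a lift of) `α`. -/
def hasRotationNumber (f : CircleDiffeo) (α : ℝ) : Prop :=
  Tendsto (fun n : ℕ => f.toFun^[n] 0 / (n : ℝ)) atTop (nhds α)

/-- The `C¹`-distance between (lifts of) circle maps : sup distance between the maps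
plus sup distance between the derivatives (computed over a fundamental domain). -/
noncomputable def distC1 (f g : ℝ → ℝ) : ℝ :=
  (⨆ x : Icc (0:ℝ) 1, |f x.1 - g x.1|) + (⨆ x : Icc (0:ℝ) 1, |deriv f x.1 - deriv g x.1|)

instance : Fact ((0:ℝ) < 1) := ⟨zero_lt_one⟩

/-- The circle homeomorphism induced on `S¹ = ℝ/ℤ` by (the lift) `f`. -/
noncomputable def CircleDiffeo.proj (f : CircleDiffeo) :
    AddCircle (1:ℝ) → AddCircle (1:ℝ) :=
  fun z => ((f.toFun (((AddCircle.equivIco 1 0) z : ℝ))) : AddCircle (1:ℝ))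

/-- `M` is the (unique) minimal set of `T` : a nonempty closed invariant set with no
proper nonempty closed invariant subset. -/
def IsMinimalSet (T : AddCircle (1:ℝ) → AddCircle (1:ℝ)) (M : Set (AddCircle (1:ℝ))) : Prop :=
  M.Nonempty ∧ IsClosed M ∧ T '' M ⊆ M ∧
    ∀ M' : Set (AddCircle (1:ℝ)), M' ⊆ M → M'.Nonempty → IsClosed M' → T '' M' ⊆ M' → M' = M

/-- The (open) arc `(u,v)` of the circle is a maximal wandering interval of `T` :
its image in `S¹` is a connected component of the complement of the minimal set `M`. -/
def IsWanderingArc (M : Set (AddCircle (1:ℝ))) (u v : ℝ) : Prop :=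
  ∃ z ∈ Mᶜ, connectedComponentIn Mᶜ z = (fun t : ℝ => (t : AddCircle (1:ℝ))) '' Set.Ioo u v

lemma circ_coe_eq {x y : ℝ} : (x : AddCircle (1:ℝ)) = y ↔ ∃ m : ℤ, x = y + m := by
  rw [← sub_eq_zero, ← AddCircle.coe_sub, AddCircle.coe_eq_zero_iff]
  constructor
  · rintro ⟨n, hn⟩
    refine ⟨n, ?_⟩
    simp at hn
    linarith
  · rintro ⟨n, hn⟩
    refine ⟨n, ?_⟩
    simp
    linarith

lemma circ_coe_add_int (x : ℝ) (m : ℤ) : ((x + m : ℝ) : AddCircle (1:ℝ)) = x :=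
  circ_coe_eq.2 ⟨m, rfl⟩

namespace CircleDiffeo

lemma strictMono (f : CircleDiffeo) : StrictMono f.toFun :=
  strictMono_of_deriv_pos f.deriv_pos

/-- The associated monotone degree one lift. -/
def toLift (f : CircleDiffeo) : CircleDeg1Lift where
  toFun := f.toFun
  monotone' := f.strictMono.monotone
  map_add_one' := f.commute_translation

lemma coe_toLift (f : CircleDiffeo) : ⇑f.toLift = f.toFun := rfl

lemma map_add_int (f : CircleDiffeo) (x : ℝ) (m : ℤ) : f.toFun (x + m) = f.toFun x + m :=
  f.toLift.map_add_int x m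

lemma iter_map_add_int (f : CircleDiffeo) (n : ℕ) (x : ℝ) (m : ℤ) :
    f.toFun^[n] (x + m) = f.toFun^[n] x + m := by
  rw [← coe_toLift, ← CircleDeg1Lift.coe_pow]
  exact (f.toLift ^ n).map_add_int x m

lemma no_periodic (f : CircleDiffeo) {α : ℝ} (hα : Irrational α) (hf : hasRotationNumber f α)
    {x : ℝ} {n : ℕ} (hn : 0 < n) (m : ℤ) : f.toFun^[n] x ≠ x + m := by
  intro h
  have h1 : f.toLift.translationNumber = α := f.toLift.translationNumber_eq_of_tendsto₀ hf
  have h2 := f.toLift.translationNumber_of_map_pow_eq_add_int (x := x) (n := n) (m := m)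
    (by rw [CircleDeg1Lift.coe_pow, coe_toLift]; exact h) hn
  rw [h1] at h2
  apply hα
  exact ⟨(m : ℚ) / n, by rw [h2]; push_cast; rfl⟩

lemma surj (f : CircleDiffeo) : Function.Surjective f.toFun :=
  f.contDiff.continuous.surjective f.toLift.tendsto_atTop f.toLift.tendsto_atBot

/-- The homeomorphism of the line underlying a lift. -/
noncomputable def homeo (f : CircleDiffeo) : ℝ ≃ₜ ℝ :=
  (f.strictMono.orderIsoOfSurjective f.toFun f.surj).toHomeomorph

lemma coe_homeo (f : CircleDiffeo) : ⇑f.homeo = f.toFun := rfl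

lemma hasDerivAt (f : CircleDiffeo) (x : ℝ) : HasDerivAt f.toFun (deriv f.toFun x) x :=
  (f.contDiff.differentiable one_ne_zero x).hasDerivAt

lemma deriv_add_one (f : CircleDiffeo) (x : ℝ) : deriv f.toFun (x + 1) = deriv f.toFun x := by
  rw [← deriv_comp_add_const]
  have : (fun x => f.toFun (x + 1)) = fun x => f.toFun x + 1 := funext f.commute_translation
  rw [this, deriv_add_const]

/-- The inverse. -/
noncomputable def inv (f : CircleDiffeo) : CircleDiffeo where
  toFun := f.homeo.symm
  contDiff := f.homeo.contDiff_symm_deriv (fun x => (f.deriv_pos x).ne') f.hasDerivAt f.contDiff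
  deriv_pos := fun x => by
    have h := HasDerivAt.of_local_left_inverse (f := f.toFun) (g := f.homeo.symm) (a := x)
      f.homeo.symm.continuous.continuousAt (f.hasDerivAt _) (f.deriv_pos _).ne'
      (Eventually.of_forall fun y => f.homeo.apply_symm_apply y)
    rw [h.deriv]
    exact inv_pos.2 (f.deriv_pos _)
  commute_translation := fun x => by
    apply f.strictMono.injective
    rw [f.commute_translation]
    have := f.homeo.apply_symm_apply
    rw [coe_homeo] at this
    rw [this, this]

lemma inv_apply (f : CircleDiffeo) (x : ℝ) : f.inv.toFun (f.toFun x) = x :=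
  f.homeo.symm_apply_apply x

lemma apply_inv (f : CircleDiffeo) (x : ℝ) : f.toFun (f.inv.toFun x) = x :=
  f.homeo.apply_symm_apply x

/-- Composition. -/
noncomputable def comp (f g : CircleDiffeo) : CircleDiffeo where
  toFun := f.toFun ∘ g.toFun
  contDiff := f.contDiff.comp g.contDiff
  deriv_pos := fun x => by
    rw [((f.hasDerivAt (g.toFun x)).comp x (g.hasDerivAt x)).deriv]
    exact mul_pos (f.deriv_pos _) (g.deriv_pos _)
  commute_translation := fun x => by
    simp [g.commute_translation, f.commute_translation]

lemma proj_coe (f : CircleDiffeo) (x : ℝ) :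
    f.proj (x : AddCircle (1:ℝ)) = ((f.toFun x : ℝ) : AddCircle (1:ℝ)) := by
  unfold proj
  have h : ((AddCircle.equivIco (1:ℝ) 0 (x : AddCircle (1:ℝ)) : ℝ)) = x + ((-⌊x⌋ : ℤ) : ℝ) := by
    have := AddCircle.coe_equivIco_mk_apply (1:ℝ) x
    refine this.trans ?_
    rw [div_one, mul_one, Int.fract]; push_cast; ring
  rw [h, f.map_add_int]
  exact circ_coe_add_int _ _

lemma proj_continuous (f : CircleDiffeo) : Continuous f.proj := by
  have hq : Topology.IsQuotientMap (fun x : ℝ => (x : AddCircle (1:ℝ))) := isQuotientMap_quotient_mk'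
  rw [hq.continuous_iff]
  have : f.proj ∘ (fun x : ℝ => (x : AddCircle (1:ℝ))) = 
      fun x => ((f.toFun x : ℝ) : AddCircle (1:ℝ)) := funext f.proj_coe
  rw [this]
  exact (AddCircle.continuous_mk' 1).comp f.contDiff.continuous

end CircleDiffeo

lemma minimal_back (g : CircleDiffeo) (M : Set (AddCircle (1:ℝ))) (hM : IsMinimalSet g.proj M)
    (x : ℝ) : ((g.toFun x : ℝ) : AddCircle (1:ℝ)) ∈ M ↔ (x : AddCircle (1:ℝ)) ∈ M := by
  obtain ⟨hne, hcl, hinv, hmin⟩ := hM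
  constructor
  · intro hx
    have himg : g.proj '' M = M := by
      apply hmin _ hinv (hne.image _)
      · exact (hcl.isCompact.image g.proj_continuous).isClosed
      · exact image_mono hinv
    rw [← himg] at hx
    obtain ⟨y, hy, hyx⟩ := hx
    obtain ⟨y, rfl⟩ := QuotientAddGroup.mk_surjective y
    have h1 : ((g.toFun y : ℝ) : AddCircle (1:ℝ)) = (g.toFun x : ℝ) := by
      rw [← hyx]; exact (g.proj_coe y).symm
    obtain ⟨m, hm⟩ := circ_coe_eq.1 h1
    rw [← g.map_add_int] at hm
    have h2 := g.strictMono.injective hm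
    have h3 : (y : AddCircle (1:ℝ)) = x := circ_coe_eq.2 ⟨m, h2⟩
    rw [← h3]; exact hy
  · intro hx
    rw [← g.proj_coe]
    exact hinv (mem_image_of_mem _ hx)

lemma minimal_back_iter (g : CircleDiffeo) (M : Set (AddCircle (1:ℝ)))
    (hM : IsMinimalSet g.proj M) (n : ℕ) (x : ℝ) :
    ((g.toFun^[n] x : ℝ) : AddCircle (1:ℝ)) ∈ M ↔ (x : AddCircle (1:ℝ)) ∈ M := by
  induction n generalizing x with
  | zero => rfl
  | succ n ih => rw [Function.iterate_succ_apply, ih, minimal_back g M hM]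

lemma arc_endpoints (M : Set (AddCircle (1:ℝ))) (hM : IsClosed M) {u v : ℝ} (huv : u < v)
    (hv : v < u + 1) (hw : IsWanderingArc M u v) :
    (u : AddCircle (1:ℝ)) ∈ M ∧ (v : AddCircle (1:ℝ)) ∈ M ∧
      ∀ x ∈ Ioo u v, (x : AddCircle (1:ℝ)) ∉ M := by
  obtain ⟨z, hz, hC⟩ := hw
  have hint : ∀ x ∈ Ioo u v, (x : AddCircle (1:ℝ)) ∉ M := by
    intro x hx
    have : (x : AddCircle (1:ℝ)) ∈ connectedComponentIn Mᶜ z := by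
      rw [hC]; exact ⟨x, hx, rfl⟩
    exact connectedComponentIn_subset _ _ this
  have hzC : z ∈ (fun t : ℝ => (t : AddCircle (1:ℝ))) '' Ioo u v := by
    rw [← hC]; exact mem_connectedComponentIn hz
  have hext : ∀ c d, c ≤ u → v ≤ d → (∀ x ∈ Ioo c d, (x : AddCircle (1:ℝ)) ∉ M) →
      ∀ x ∈ Ioo c d, ∃ t ∈ Ioo u v, ∃ m : ℤ, x = t + m := by
    intro c d hc hd hcd x hx
    have hpre : IsPreconnected ((fun t : ℝ => (t : AddCircle (1:ℝ))) '' Ioo c d) :=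
      isPreconnected_Ioo.image _ (AddCircle.continuous_mk' 1).continuousOn
    have hsub := hpre.subset_connectedComponentIn (x := z) (F := Mᶜ)
      (image_mono (Ioo_subset_Ioo hc hd) hzC)
      (by rintro _ ⟨t, ht, rfl⟩; exact hcd t ht)
    rw [hC] at hsub
    obtain ⟨t, ht, htx⟩ := hsub ⟨x, hx, rfl⟩
    obtain ⟨m, hm⟩ := circ_coe_eq.1 htx.symm
    exact ⟨t, ht, m, hm⟩
  have hopen : IsOpen ((fun t : ℝ => (t : AddCircle (1:ℝ))) ⁻¹' Mᶜ) :=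
    hM.isOpen_compl.preimage (AddCircle.continuous_mk' 1)
  refine ⟨?_, ?_, hint⟩
  · by_contra hu
    obtain ⟨δ, hδ, hb⟩ := Metric.isOpen_iff.1 hopen u hu
    rw [Real.ball_eq_Ioo] at hb
    obtain ⟨t, ht, m, hm⟩ := hext (u - δ) v (by linarith) le_rfl (by
      intro x hx
      rcases lt_or_ge u x with h | h
      · exact hint x ⟨h, hx.2⟩
      · exact hb ⟨hx.1, by linarith⟩) u ⟨by linarith, huv⟩
    have h1 : (m : ℝ) < 0 := by linarith [ht.1]
    have h2 : (-1 : ℝ) < m := by linarith [ht.2]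
    have h1' : m < 0 := by exact_mod_cast h1
    have h2' : -1 < m := by exact_mod_cast h2
    omega
  · by_contra hu
    obtain ⟨δ, hδ, hb⟩ := Metric.isOpen_iff.1 hopen v hu
    rw [Real.ball_eq_Ioo] at hb
    obtain ⟨t, ht, m, hm⟩ := hext u (v + δ) le_rfl (by linarith) (by
      intro x hx
      rcases lt_or_ge x v with h | h
      · exact hint x ⟨hx.1, h⟩
      · exact hb ⟨by linarith, hx.2⟩) v ⟨huv, by linarith⟩
    have h1 : (0 : ℝ) < m := by linarith [ht.2]
    have h2 : (m : ℝ) < 1 := by linarith [ht.1]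
    have h1' : 0 < m := by exact_mod_cast h1
    have h2' : m < 1 := by exact_mod_cast h2
    omega

lemma gap_interior (g : CircleDiffeo) (M : Set (AddCircle (1:ℝ)))
    (hM : IsMinimalSet g.proj M) {u v : ℝ}
    (hint : ∀ x ∈ Ioo u v, (x : AddCircle (1:ℝ)) ∉ M) (n : ℕ) (m : ℤ) (y : ℝ)
    (hy : y ∈ Ioo (g.toFun^[n] u + m) (g.toFun^[n] v + m)) : (y : AddCircle (1:ℝ)) ∉ M := by
  have hs : StrictMono g.toFun^[n] := g.strictMono.iterate n
  obtain ⟨x, hx⟩ := g.surj.iterate n (y - m)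
  have hxy : y = g.toFun^[n] x + m := by linarith
  rw [hxy, circ_coe_add_int, minimal_back_iter g M hM]
  apply hint
  constructor
  · apply hs.lt_iff_lt.1; linarith [hy.1]
  · apply hs.lt_iff_lt.1; linarith [hy.2]

lemma gaps_disjoint {α : ℝ} (hα : Irrational α) (f h g : CircleDiffeo)
    (hf : hasRotationNumber f α) (hc : ∀ x : ℝ, g.toFun (h.toFun x) = h.toFun (f.toFun x))
    (M : Set (AddCircle (1:ℝ))) (hM : IsMinimalSet g.proj M) {a b : ℝ}
    (hu : ((h.toFun a : ℝ) : AddCircle (1:ℝ)) ∈ M)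
    (hint : ∀ x ∈ Ioo (h.toFun a) (h.toFun b), (x : AddCircle (1:ℝ)) ∉ M)
    {i j : ℕ} (hij : i < j) (m : ℤ) :
    Disjoint (Ioo (f.toFun^[i] a) (f.toFun^[i] b))
      (Ioo (f.toFun^[j] a + m) (f.toFun^[j] b + m)) := by
  rw [Set.disjoint_left]
  intro p hp1 hp2
  have hsc : ∀ (n : ℕ) (x : ℝ), g.toFun^[n] (h.toFun x) = h.toFun (f.toFun^[n] x) := fun n x =>
    ((Function.Semiconj.iterate_right (f := h.toFun) (ga := f.toFun) (gb := g.toFun)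
      (fun x => (hc x).symm) n) x).symm
  have q1 : h.toFun p ∈ Ioo (g.toFun^[i] (h.toFun a) + ((0:ℤ):ℝ)) (g.toFun^[i] (h.toFun b) + ((0:ℤ):ℝ)) := by
    rw [hsc, hsc]
    simp only [Int.cast_zero, add_zero]
    exact ⟨h.strictMono hp1.1, h.strictMono hp1.2⟩
  have q2 : h.toFun p ∈ Ioo (g.toFun^[j] (h.toFun a) + m) (g.toFun^[j] (h.toFun b) + m) := by
    rw [hsc, hsc, ← h.map_add_int, ← h.map_add_int]
    exact ⟨h.strictMono hp2.1, h.strictMono hp2.2⟩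
  have e1 : ∀ (n : ℕ) (m : ℤ), ((g.toFun^[n] (h.toFun a) + m : ℝ) : AddCircle (1:ℝ)) ∈ M := by
    intro n m
    rw [circ_coe_add_int, minimal_back_iter g M hM]; exact hu
  have heq : g.toFun^[i] (h.toFun a) + ((0:ℤ):ℝ) = g.toFun^[j] (h.toFun a) + m := by
    rcases lt_trichotomy (g.toFun^[i] (h.toFun a) + ((0:ℤ):ℝ)) (g.toFun^[j] (h.toFun a) + m)
      with hlt | heq | hlt
    · exact absurd (e1 j m) (gap_interior g M hM hint i 0 (g.toFun^[j] (h.toFun a) + m) ⟨hlt, q2.1.trans q1.2⟩)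
    · exact heq
    · exact absurd (e1 i 0) (gap_interior g M hM hint j m (g.toFun^[i] (h.toFun a) + ((0:ℤ):ℝ)) ⟨hlt, q1.1.trans q2.2⟩)
  rw [hsc, hsc, ← h.map_add_int, ← h.map_add_int] at heq
  have heq' := h.strictMono.injective heq
  have hk : f.toFun^[j - i] (f.toFun^[i] a) = f.toFun^[j] a := by
    rw [← Function.iterate_add_apply]; congr 2; omega
  apply f.no_periodic hα hf (x := f.toFun^[i] a) (n := j - i) (by omega) (-m)
  rw [hk]
  push_cast at heq' ⊢
  linarith

lemma sum_len_le (p q : ℕ → ℝ) (hpq : ∀ i, p i ≤ q i) (hq : ∀ i, q i ≤ p i + 1)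
    (hd : ∀ i j, i < j → ∀ m : ℤ, Disjoint (Ioo (p i) (q i)) (Ioo (p j + m) (q j + m))) (N : ℕ) :
    ∑ i ∈ Finset.range N, (q i - p i) ≤ 2 := by
  let I : ℕ → Set ℝ := fun i => Ioo (p i - ⌊p i⌋) (q i - ⌊p i⌋)
  have hdis : ∀ i j, i < j → Disjoint (I i) (I j) := by
    intro i j hij
    rw [Set.disjoint_left]
    intro x hx hx'
    have hdd := Set.disjoint_left.1 (hd i j hij (⌊p i⌋ - ⌊p j⌋))
    refine hdd (a := x + (⌊p i⌋ : ℝ)) ?_ ?_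
    · exact ⟨by linarith [hx.1], by linarith [hx.2]⟩
    · push_cast
      exact ⟨by linarith [hx'.1], by linarith [hx'.2]⟩
  have hpair : (↑(Finset.range N) : Set ℕ).PairwiseDisjoint I := by
    intro i _ j _ hij
    rcases lt_or_gt_of_ne hij with h | h
    · exact hdis i j h
    · exact (hdis j i h).symm
  have hmeas := MeasureTheory.measure_biUnion_finset (μ := MeasureTheory.volume) hpair
    (fun i _ => (measurableSet_Ioo : MeasurableSet (I i)))
  have hsub : (⋃ i ∈ Finset.range N, I i) ⊆ Icc 0 2 := by
    intro x hx
    simp only [mem_iUnion] at hx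
    obtain ⟨i, _, hx⟩ := hx
    constructor
    · linarith [hx.1, Int.floor_le (p i)]
    · linarith [hx.2, hq i, Int.lt_floor_add_one (p i)]
  have hle := MeasureTheory.measure_mono (μ := MeasureTheory.volume) hsub
  rw [hmeas] at hle
  have : ∀ i, MeasureTheory.volume (I i) = ENNReal.ofReal (q i - p i) := by
    intro i
    simp only [I, Real.volume_Ioo]
    congr 1; ring
  simp only [this, Real.volume_Icc] at hle
  rw [← ENNReal.ofReal_sum_of_nonneg (fun i _ => sub_nonneg.2 (hpq i))] at hle
  rw [ENNReal.ofReal_le_ofReal_iff (by norm_num)] at hle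
  linarith

lemma periodic_modulus (φ : ℝ → ℝ) (hφ : Continuous φ) (hp : Function.Periodic φ 1) (ε : ℝ)
    (hε : 0 < ε) : ∃ K : ℝ, 0 ≤ K ∧ ∀ x y, |φ x - φ y| ≤ ε + K * |x - y| := by
  have huc : UniformContinuous φ := by
    have h1 : Continuous hp.lift := hφ.quotient_lift _
    have h2 : UniformContinuous hp.lift := CompactSpace.uniformContinuous_of_continuous h1
    have h3 : UniformContinuous (QuotientAddGroup.mk' (AddSubgroup.zmultiples (1:ℝ))) :=
      uniformContinuous_addMonoidHom_of_continuous (AddCircle.continuous_mk' 1)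
    exact h2.comp h3
  obtain ⟨C, hC⟩ := (hp.isBounded_of_continuous one_ne_zero hφ).exists_norm_le
  have hC' : ∀ x, |φ x| ≤ C := fun x => hC _ ⟨x, rfl⟩
  have hC0 : 0 ≤ C := (abs_nonneg _).trans (hC' 0)
  obtain ⟨δ, hδ, hδ'⟩ := Metric.uniformContinuous_iff.1 huc ε hε
  refine ⟨2 * C / δ, by positivity, fun x y => ?_⟩
  rcases lt_or_ge |x - y| δ with h | h
  · have h1 : |φ x - φ y| < ε := hδ' h
    have : 0 ≤ 2 * C / δ * |x - y| := by positivity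
    linarith
  · have h1 : |φ x - φ y| ≤ |φ x| + |φ y| := abs_sub _ _
    have h2 : 2 * C ≤ 2 * C / δ * |x - y| := by
      rw [div_mul_eq_mul_div, le_div_iff₀ hδ]
      exact mul_le_mul_of_nonneg_left h (by positivity)
    linarith [hC' x, hC' y]

/-- A circle diffeomorphism with prescribed derivative, up to normalisation. -/
lemma exists_diffeo (D : ℝ → ℝ) (hD : Continuous D) (hpos : ∀ x, 0 < D x)
    (hp : Function.Periodic D 1) :
    ∃ h : CircleDiffeo, ∃ c : ℝ, 0 < c ∧ ∀ x, deriv h.toFun x = c * D x := by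
  have hI : ∀ a b, IntervalIntegrable D MeasureTheory.volume a b := fun a b => hD.intervalIntegrable a b
  set A := ∫ t in (0:ℝ)..1, D t with hA
  have hApos : 0 < A := intervalIntegral.intervalIntegral_pos_of_pos (hI 0 1) hpos one_pos
  have hder : ∀ x, HasDerivAt (fun x => A⁻¹ * ∫ t in (0:ℝ)..x, D t) (A⁻¹ * D x) x := fun x =>
    (intervalIntegral.integral_hasDerivAt_right (hI 0 x)
      (hD.stronglyMeasurableAtFilter _ _) hD.continuousAt).const_mul _
  have hde : deriv (fun x => A⁻¹ * ∫ t in (0:ℝ)..x, D t) = fun x => A⁻¹ * D x :=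
    funext fun x => (hder x).deriv
  refine ⟨⟨fun x => A⁻¹ * ∫ t in (0:ℝ)..x, D t, ?_, ?_, ?_⟩, A⁻¹, inv_pos.2 hApos, ?_⟩
  · rw [contDiff_one_iff_deriv]
    refine ⟨fun x => (hder x).differentiableAt, ?_⟩
    rw [hde]
    exact continuous_const.mul hD
  · intro x
    rw [hde]
    exact mul_pos (inv_pos.2 hApos) (hpos x)
  · intro x
    have h1 := intervalIntegral.integral_add_adjacent_intervals (hI 0 x) (hI x (x + 1))
    have h2 := hp.intervalIntegral_add_eq x 0
    rw [zero_add] at h2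
    rw [← h1, h2, ← hA, mul_add, inv_mul_cancel₀ hApos.ne']
  · intro x
    rw [hde]

/-- Conjugating by a suitable average makes the log-derivative a Birkhoff average. -/
lemma exists_conj (f : CircleDiffeo) (N : ℕ) (hN : 0 < N) :
    ∃ h g : CircleDiffeo, (∀ x : ℝ, g.toFun (h.toFun x) = h.toFun (f.toFun x)) ∧
      ∀ x, Real.log (deriv g.toFun (h.toFun x)) =
        (∑ i ∈ Finset.range N, Real.log (deriv f.toFun (f.toFun^[i] x))) / N := by
  set φ : ℝ → ℝ := fun x => Real.log (deriv f.toFun x) with hφ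
  have hφc : Continuous φ :=
    (f.contDiff.continuous_deriv le_rfl).log fun x => (f.deriv_pos x).ne'
  have hφp : ∀ x, φ (x + 1) = φ x := fun x => by simp only [hφ, f.deriv_add_one]
  set L : ℕ → ℝ → ℝ := fun n x => ∑ i ∈ Finset.range n, φ (f.toFun^[i] x) with hL
  have hLc : ∀ n, Continuous (L n) := fun n =>
    continuous_finsetSum _ fun i _ => hφc.comp (f.contDiff.continuous.iterate i)
  have hLp : ∀ n x, L n (x + 1) = L n x := by
    intro n x
    refine Finset.sum_congr rfl fun i _ => ?_
    have := f.iter_map_add_int i x 1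
    rw [Int.cast_one] at this
    rw [this, hφp]
  have hLf : ∀ n x, L n (f.toFun x) = L (n + 1) x - φ x := by
    intro n x
    simp only [hL, Finset.sum_range_succ', Function.iterate_succ_apply, Function.iterate_zero, id]
    ring
  set ψ : ℝ → ℝ := fun x => (∑ i ∈ Finset.range N, L i x) / N with hψ
  have hN' : (N : ℝ) ≠ 0 := by positivity
  have hψf : ∀ x, ψ (f.toFun x) - ψ x + φ x = L N x / N := by
    intro x
    have h1 : ∑ i ∈ Finset.range N, L i (f.toFun x) - ∑ i ∈ Finset.range N, L i x
        = L N x - N * φ x := by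
      rw [← Finset.sum_sub_distrib]
      have : ∀ i, L i (f.toFun x) - L i x = (L (i + 1) x - L i x) - φ x := fun i => by
        rw [hLf]; ring
      simp only [this]
      rw [Finset.sum_sub_distrib, Finset.sum_range_sub (fun i => L i x)]
      simp [hL]
    simp only [hψ]
    rw [← sub_div, h1]
    field_simp
    ring
  obtain ⟨h, c, hc, hh⟩ := exists_diffeo (fun x => Real.exp (ψ x))
    (Real.continuous_exp.comp
      ((continuous_finsetSum _ fun i _ => hLc i).div_const _))
    (fun x => Real.exp_pos _) (fun x => by simp only [hψ, hLp])
  refine ⟨h, h.comp (f.comp h.inv), fun x => ?_, fun x => ?_⟩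
  · change h.toFun (f.toFun (h.inv.toFun (h.toFun x))) = _
    rw [h.inv_apply]
  · set g := h.comp (f.comp h.inv) with hg
    have hconj : g.toFun ∘ h.toFun = h.toFun ∘ f.toFun := by
      funext x
      change h.toFun (f.toFun (h.inv.toFun (h.toFun x))) = _
      rw [h.inv_apply]; rfl
    have d1 := (g.hasDerivAt (h.toFun x)).comp x (h.hasDerivAt x)
    have d2 := (h.hasDerivAt (f.toFun x)).comp x (f.hasDerivAt x)
    rw [hconj] at d1
    have he := congrArg Real.log (d1.unique d2)
    rw [Real.log_mul (g.deriv_pos _).ne' (h.deriv_pos _).ne',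
      Real.log_mul (h.deriv_pos _).ne' (f.deriv_pos _).ne', hh, hh,
      Real.log_mul hc.ne' (Real.exp_pos _).ne', Real.log_mul hc.ne' (Real.exp_pos _).ne',
      Real.log_exp, Real.log_exp] at he
    have := hψf x
    simp only [hL, hφ] at this ⊢
    linarith

/-- **Proposition.** Let `f` be a `C¹`-diffeomorphism of `S¹` with irrational rotation
number `α`. For any `ε > 0` there is a `C¹`-diffeomorphism `h` such that the distorsion
of `g = h∘f∘h⁻¹` on each maximal wandering interval `[u,v]` of `g` (the closure of a
connected component of the complement of the minimal set of `g`) is bounded by `ε`. -/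
theorem small_distorsion_on_wandering (α : ℝ) (hα : Irrational α)
    (f : CircleDiffeo) (hf : hasRotationNumber f α) (ε : ℝ) (hε : 0 < ε) :
    ∃ h g : CircleDiffeo, (∀ x : ℝ, g.toFun (h.toFun x) = h.toFun (f.toFun x)) ∧
      ∀ M : Set (AddCircle (1:ℝ)), IsMinimalSet g.proj M →
        ∀ u v : ℝ, u < v → v < u + 1 → IsWanderingArc M u v →
          ∀ w₁ ∈ Set.Icc u v, ∀ w₂ ∈ Set.Icc u v,
            Real.log (deriv g.toFun w₁ / deriv g.toFun w₂) ≤ ε := by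
  obtain ⟨K, hK, hmod⟩ := periodic_modulus (fun x => Real.log (deriv f.toFun x))
    ((f.contDiff.continuous_deriv le_rfl).log fun x => (f.deriv_pos x).ne')
    (fun x => by simp only [f.deriv_add_one]) (ε / 2) (by linarith)
  obtain ⟨N, hN⟩ := exists_nat_gt (4 * K / ε)
  have hN0 : (0:ℝ) < N := lt_of_le_of_lt (by positivity) hN
  have hNK : 4 * K < N * ε := by rwa [div_lt_iff₀ hε] at hN
  obtain ⟨h, g, hc, hg⟩ := exists_conj f N (by exact_mod_cast hN0)
  refine ⟨h, g, hc, ?_⟩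
  intro M hM u v huv hv hw w₁ hw₁ w₂ hw₂
  obtain ⟨hu, -, hint⟩ := arc_endpoints M hM.2.1 huv hv hw
  obtain ⟨a, rfl⟩ := h.surj u
  obtain ⟨b, rfl⟩ := h.surj v
  obtain ⟨x, rfl⟩ := h.surj w₁
  obtain ⟨y, rfl⟩ := h.surj w₂
  have hab : a < b := h.strictMono.lt_iff_lt.1 huv
  have hb : b < a + 1 := by
    apply h.strictMono.lt_iff_lt.1
    rw [h.commute_translation]; exact hv
  have hm : ∀ n, Monotone f.toFun^[n] := fun n => f.strictMono.monotone.iterate n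
  have hsum := sum_len_le (fun i => f.toFun^[i] a) (fun i => f.toFun^[i] b)
    (fun i => hm i hab.le)
    (fun i => by
      have h1 := f.iter_map_add_int i a 1
      rw [Int.cast_one] at h1
      rw [← h1]; exact hm i hb.le)
    (fun i j hij m => gaps_disjoint hα f h g hf hc M hM hu hint hij m) N
  rw [Real.log_div (g.deriv_pos _).ne' (g.deriv_pos _).ne', hg, hg, ← sub_div,
    ← Finset.sum_sub_distrib, div_le_iff₀ hN0]
  have hle : ∀ z, h.toFun z ∈ Icc (h.toFun a) (h.toFun b) → ∀ i,
      f.toFun^[i] a ≤ f.toFun^[i] z ∧ f.toFun^[i] z ≤ f.toFun^[i] b := fun z hz i =>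
    ⟨hm i (h.strictMono.le_iff_le.1 hz.1), hm i (h.strictMono.le_iff_le.1 hz.2)⟩
  have hterm : ∀ i ∈ Finset.range N,
      Real.log (deriv f.toFun (f.toFun^[i] x)) - Real.log (deriv f.toFun (f.toFun^[i] y)) ≤
        ε / 2 + K * (f.toFun^[i] b - f.toFun^[i] a) := by
    intro i _
    have h1 := (le_abs_self _).trans (hmod (f.toFun^[i] x) (f.toFun^[i] y))
    have h2 : |f.toFun^[i] x - f.toFun^[i] y| ≤ f.toFun^[i] b - f.toFun^[i] a := by
      rw [abs_le]
      constructor <;> linarith [(hle x hw₁ i).1, (hle x hw₁ i).2, (hle y hw₂ i).1, (hle y hw₂ i).2]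
    have h3 := mul_le_mul_of_nonneg_left h2 hK
    linarith
  refine (Finset.sum_le_sum hterm).trans ?_
  rw [Finset.sum_add_distrib, ← Finset.mul_sum, Finset.sum_const, Finset.card_range, nsmul_eq_mul]
  have := mul_le_mul_of_nonneg_left hsum hK
  linarith
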